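/- For every (φ,φ̄) ∈ G(T,R) and every k ∈ ℤ, the subspace φ·W := φ(W^♯) ∩ V is E-commensurable of index k with W if and only if d(φ) = k. -/

import Mathlib

open Module Submodule

noncomputable section

abbrev TT : Type := (ℕ → ℂ) × (ℕ →₀ ℂ)
abbrev RR : Type := (ℕ →₀ ℂ) × (ℕ → ℂ)

lemma lc_v_add (v w : ℕ → ℂ) (l : ℕ →₀ ℂ) :
    Finsupp.linearCombination ℂ (v + w) l
      = Finsupp.linearCombination ℂ v l + Finsupp.linearCombination ℂ w l := by
  classical
  simp only [Finsupp.linearCombination_apply]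
  rw [← Finsupp.sum_add]
  exact Finsupp.sum_congr fun i _ => by simp [Pi.add_apply, smul_add, mul_add]

lemma lc_v_smul (c : ℂ) (v : ℕ → ℂ) (l : ℕ →₀ ℂ) :
    Finsupp.linearCombination ℂ (c • v) l = c • Finsupp.linearCombination ℂ v l := by
  classical
  simp only [Finsupp.linearCombination_apply, Finsupp.smul_sum]
  exact Finsupp.sum_congr fun i _ => by simp [Pi.smul_apply, smul_comm, smul_eq_mul, mul_left_comm]

/-- The nondegenerate pairing `p : T × R → ℂ`,
`p((ω,u),(w,ν)) = Σ_i ω(i)w(i) + Σ_i u(i)ν(i)`. -/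
def pairB : TT →ₗ[ℂ] RR →ₗ[ℂ] ℂ :=
  LinearMap.mk₂ ℂ
    (fun x y => Finsupp.linearCombination ℂ x.1 y.1 + Finsupp.linearCombination ℂ y.2 x.2)
    (fun x x' y => by
      simp only [Prod.fst_add, Prod.snd_add, lc_v_add, map_add]; ring)
    (fun c x y => by
      simp only [Prod.smul_fst, Prod.smul_snd, lc_v_smul, map_smul, smul_add])
    (fun x y y' => by
      simp only [Prod.fst_add, Prod.snd_add, lc_v_add, map_add]; ring)
    (fun c x y => by
      simp only [Prod.smul_fst, Prod.smul_snd, lc_v_smul, map_smul, smul_add])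

/-- The Mackey-group condition on a pair of automorphisms:
`p(φ x, y) = p(x, φ̄ y)` for all `x ∈ T`, `y ∈ R`. -/
def IsMackey (φ : TT ≃ₗ[ℂ] TT) (ψ : RR ≃ₗ[ℂ] RR) : Prop :=
  ∀ (x : TT) (y : RR), pairB (φ x) y = pairB x (ψ y)

/-- `W^♯ = (ℕ→ℂ) × {0} ⊆ T`. -/
def Wsharp : Submodule ℂ TT := LinearMap.range (LinearMap.inl ℂ (ℕ → ℂ) (ℕ →₀ ℂ))

/-- `U^♯ = {0} × (ℕ→ℂ) ⊆ R`. -/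
def Usharp : Submodule ℂ RR := LinearMap.range (LinearMap.inr ℂ (ℕ →₀ ℂ) (ℕ → ℂ))

/-- `V = (ℕ→₀ℂ) × (ℕ→₀ℂ) ⊆ T`. -/
def Vsub : Submodule ℂ TT :=
  LinearMap.range
    ((Finsupp.lcoeFun : (ℕ →₀ ℂ) →ₗ[ℂ] (ℕ → ℂ)).prodMap
      (LinearMap.id : (ℕ →₀ ℂ) →ₗ[ℂ] (ℕ →₀ ℂ)))

/-- `W = (ℕ→₀ℂ) × {0} ⊆ T`. -/
def Wsub : Submodule ℂ TT :=
  LinearMap.range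
    ((LinearMap.inl ℂ (ℕ → ℂ) (ℕ →₀ ℂ)).comp
      (Finsupp.lcoeFun : (ℕ →₀ ℂ) →ₗ[ℂ] (ℕ → ℂ)))

/-- `π_U : T → (ℕ→₀ℂ)`, the second projection. -/
def piU : TT →ₗ[ℂ] (ℕ →₀ ℂ) := LinearMap.snd ℂ (ℕ → ℂ) (ℕ →₀ ℂ)

/-- `π_{W*} : R → (ℕ→₀ℂ)`, the first projection. -/
def piW : RR →ₗ[ℂ] (ℕ →₀ ℂ) := LinearMap.fst ℂ (ℕ →₀ ℂ) (ℕ → ℂ)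

/-- The degree `d(φ) = dim π_U(φ(W^♯)) − dim π_U(φ^{-1}(W^♯))`. -/
def deg (φ : TT ≃ₗ[ℂ] TT) : ℤ :=
  (Module.finrank ℂ ((Wsharp.map φ.toLinearMap).map piU) : ℤ) -
    (Module.finrank ℂ ((Wsharp.map φ.symm.toLinearMap).map piU) : ℤ)

/-- `span {(δ_i, 0) : i ≥ n} ⊆ T`. -/
def tailSpan (n : ℕ) : Submodule ℂ TT :=
  Submodule.span ℂ
    ((fun i => ((((Finsupp.single i (1 : ℂ)) : ℕ →₀ ℂ) : ℕ → ℂ), (0 : ℕ →₀ ℂ))) '' {i | n ≤ i})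

/-- `W'` is E-commensurable of index `k` with `W`:
`W' = G ⊕ span{(δ_i,0) : i ≥ n}` with `G ⊆ V` finite-dimensional of dimension `n + k`. -/
def Ecomm (W' : Submodule ℂ TT) (k : ℤ) : Prop :=
  ∃ (n : ℕ) (G : Submodule ℂ TT), G ≤ Vsub ∧ FiniteDimensional ℂ G ∧
    (Module.finrank ℂ G : ℤ) = (n : ℤ) + k ∧ Disjoint G (tailSpan n) ∧
    W' = G ⊔ tailSpan n

/-- `W'^⊥ = {y ∈ R : p(x,y) = 0 for all x ∈ W'}`. -/
def perpR (W' : Submodule ℂ TT) : Submodule ℂ RR :=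
  ⨅ x ∈ (W' : Set TT), LinearMap.ker (pairB x)

/-- `Y^⊥ = {x ∈ T : p(x,y) = 0 for all y ∈ Y}`. -/
def perpT (Y : Submodule ℂ RR) : Submodule ℂ TT :=
  ⨅ y ∈ (Y : Set RR), LinearMap.ker (pairB.flip y)

/-- The action `φ·W' = φ((W'^⊥)^⊥) ∩ V`. -/
def actOn (φ : TT ≃ₗ[ℂ] TT) (W' : Submodule ℂ TT) : Submodule ℂ TT :=
  ((perpT (perpR W')).map φ.toLinearMap) ⊓ Vsub

end

/-!
Split `T` as `ℂⁿ × (ℕ →₀ ℂ)` plus the `n`-th tail of `W^♯`. Adjointness makes every coordinate of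
`ω ↦ π_U (φ (ω, 0))` depend on finitely many coordinates of `ω`. Since every value is finitely
supported, the Baire category theorem for the product of discrete copies of `ℂ` shows that the whole
map kills some tail, and the same holds for `φ⁻¹`. For large `n` the subspace `φ(W^♯)` therefore
contains the `n`-th tail, and `φ(W^♯) ∩ V` is the direct sum of `G = φ(W^♯) ∩ (ℂⁿ × (ℕ →₀ ℂ))` and
the finitely supported part of the tail. The maps `π_U` on `G` and `π_U ∘ φ⁻¹` on
`W^♯ ∩ (ℂⁿ × (ℕ →₀ ℂ)) ≅ ℂⁿ` have the same kernel `G ∩ W^♯`, and their images are the two spaces in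
the definition of `d(φ)`, so rank–nullity gives `dim G = n + d(φ)`. Finally, the index `k` of `W'`
is unique because `dim W' / tailSpan m = m + k` for all large `m`.
-/

section Ring

variable {R M N : Type*} [Ring R] [AddCommGroup M] [Module R M] [AddCommGroup N] [Module R N]

theorem map_inf_eq_map_of_codisjoint {f : M →ₗ[R] N} {p q r : Submodule R M}
    (hqr : Codisjoint q r) (hp : r ≤ p) (hf : r ≤ LinearMap.ker f) :
    (p ⊓ q).map f = p.map f := by
  have hmap_r : r.map f = ⊥ := LinearMap.le_ker_iff_map.1 hf
  have hmodular : p ⊓ q ⊔ r = p := by rw [inf_sup_assoc_of_le q hp, hqr.eq_top, inf_top_eq]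
  rw [← sup_bot_eq ((p ⊓ q).map f), ← hmap_r, ← Submodule.map_sup, hmodular]

theorem finrank_map_mkQ_of_disjoint {p q : Submodule R M} (h : Disjoint p q) :
    finrank R (p.map q.mkQ) = finrank R p := by
  rw [← LinearMap.range_domRestrict]
  refine LinearMap.finrank_range_of_inj (LinearMap.injective_domRestrict_iff.2 ?_)
  rwa [Submodule.ker_mkQ]

end Ring

section DivisionRing

variable {K M N N' : Type*} [DivisionRing K] [AddCommGroup M] [Module K M]
  [AddCommGroup N] [Module K N] [AddCommGroup N'] [Module K N']

theorem finrank_sup_of_disjoint {p q : Submodule K M} [FiniteDimensional K p]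
    [FiniteDimensional K q] (h : Disjoint p q) :
    finrank K (p ⊔ q : Submodule K M) = finrank K p + finrank K q := by
  rw [← Submodule.finrank_sup_add_finrank_inf_eq, h.eq_bot, finrank_bot, add_zero]

theorem finrank_map_add_finrank_inf_ker (f : M →ₗ[K] N) (p : Submodule K M)
    [FiniteDimensional K p] :
    finrank K (p.map f) + finrank K (p ⊓ LinearMap.ker f : Submodule K M) = finrank K p := by
  have hker := p.finrank_map_subtype_eq ((LinearMap.ker f).comap p.subtype)
  rw [Submodule.map_comap_subtype] at hker
  rw [← LinearMap.finrank_range_add_finrank_ker (f.domRestrict p), LinearMap.range_domRestrict,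
    LinearMap.ker_domRestrict, hker]

theorem finiteDimensional_ker_inf {f : M →ₗ[K] N} {g : M →ₗ[K] N'} {q : Submodule K M}
    [FiniteDimensional K ((LinearMap.ker g).map f)]
    [FiniteDimensional K (LinearMap.ker f ⊓ q : Submodule K M)] :
    FiniteDimensional K (LinearMap.ker g ⊓ q : Submodule K M) := by
  refine Module.Finite.iff_fg.2 (Submodule.fg_of_fg_map_of_fg_inf_ker f ?_ ?_)
  · have := Submodule.finiteDimensional_of_le
      (Submodule.map_mono inf_le_left : (LinearMap.ker g ⊓ q).map f ≤ (LinearMap.ker g).map f)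
    exact Module.Finite.iff_fg.1 this
  · have := Submodule.finiteDimensional_of_le
      (le_inf inf_le_right (inf_le_left.trans inf_le_right) :
        LinearMap.ker g ⊓ q ⊓ LinearMap.ker f ≤ LinearMap.ker f ⊓ q)
    exact Module.Finite.iff_fg.1 this

theorem finrank_ker_inf_add_finrank_map_ker {f : M →ₗ[K] N} {g : M →ₗ[K] N'}
    {q r : Submodule K M} (hqr : Codisjoint q r) (hf : r ≤ LinearMap.ker f)
    (hg : r ≤ LinearMap.ker g) [FiniteDimensional K (LinearMap.ker f ⊓ q : Submodule K M)]
    [FiniteDimensional K (LinearMap.ker g ⊓ q : Submodule K M)] :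
    finrank K (LinearMap.ker g ⊓ q : Submodule K M) + finrank K ((LinearMap.ker f).map g) =
      finrank K (LinearMap.ker f ⊓ q : Submodule K M) + finrank K ((LinearMap.ker g).map f) := by
  have hrank_f := finrank_map_add_finrank_inf_ker f (LinearMap.ker g ⊓ q)
  have hrank_g := finrank_map_add_finrank_inf_ker g (LinearMap.ker f ⊓ q)
  rw [map_inf_eq_map_of_codisjoint hqr hg hf, inf_right_comm, inf_comm (LinearMap.ker g)] at hrank_f
  rw [map_inf_eq_map_of_codisjoint hqr hf hg, inf_right_comm] at hrank_g
  omega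

end DivisionRing

section Baire

theorem isOpen_ker_of_forall_isOpen_ker_apply {G ι B : Type*} [AddGroup G] [TopologicalSpace G]
    [ContinuousAdd G] [BaireSpace G] [Countable ι] [AddZeroClass B] (f : G →+ ι →₀ B)
    (hf : ∀ j, IsOpen (((Finsupp.applyAddHom j).comp f).ker : Set G)) :
    IsOpen (f.ker : Set G) := by
  let S (s : Finset ι) : AddSubgroup G := ⨅ j ∉ s, ((Finsupp.applyAddHom j).comp f).ker
  have mem_S {s : Finset ι} {x : G} : x ∈ S s ↔ ∀ j ∉ s, f x j = 0 := by
    simp [S, AddSubgroup.mem_iInf, AddMonoidHom.mem_ker]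
  have hclosed (s : Finset ι) : IsClosed (S s : Set G) := by
    simp only [S, AddSubgroup.coe_iInf]
    exact isClosed_biInter fun j _ => AddSubgroup.isClosed_of_isOpen _ (hf j)
  have hcover : ⋃ s, (S s : Set G) = Set.univ :=
    Set.eq_univ_of_forall fun x => Set.mem_iUnion.2
      ⟨(f x).support, mem_S.2 fun _ => Finsupp.notMem_support_iff.1⟩
  obtain ⟨s, x, hx⟩ := nonempty_interior_of_iUnion_of_closed hclosed hcover
  have hopen : IsOpen (S s : Set G) := (S s).isOpen_of_mem_nhds (mem_interior_iff_mem_nhds.1 hx)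
  have hker : (f.ker : Set G) =
      (S s : Set G) ∩ ⋂ j ∈ s, (((Finsupp.applyAddHom j).comp f).ker : Set G) := by
    ext x
    simp only [Set.mem_inter_iff, SetLike.mem_coe, mem_S, Set.mem_iInter, AddMonoidHom.mem_ker,
      AddMonoidHom.comp_apply, Finsupp.applyAddHom_apply, Finsupp.ext_iff, Finsupp.zero_apply]
    exact ⟨fun h => ⟨fun j _ => h j, fun j _ => h j⟩, fun h j => by_cases (h.2 j) (h.1 j)⟩
  rw [hker]
  exact hopen.inter (isOpen_biInter_finset fun j _ => hf j)

theorem addSubgroup_isOpen_iff_exists_cylinder_subset {A : ℕ → Type*} [∀ i, AddGroup (A i)]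
    [∀ i, TopologicalSpace (A i)] [∀ i, DiscreteTopology (A i)] {H : AddSubgroup (∀ i, A i)} :
    IsOpen (H : Set (∀ i, A i)) ↔ ∃ n, PiNat.cylinder 0 n ⊆ (H : Set (∀ i, A i)) := by
  constructor
  · intro hH
    obtain ⟨_, ⟨x, n, rfl⟩, hx, hsub⟩ :=
      (PiNat.isTopologicalBasis_cylinders A).exists_subset_of_mem_open H.zero_mem hH
    exact ⟨n, (PiNat.mem_cylinder_iff_eq.1 hx).trans_subset hsub⟩
  · rintro ⟨n, hn⟩
    exact H.isOpen_of_mem_nhds (g := 0) (Filter.mem_of_superset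
      ((PiNat.isOpen_cylinder A 0 n).mem_nhds (PiNat.self_mem_cylinder 0 n)) hn)

theorem exists_cylinder_subset_ker {A : ℕ → Type*} [∀ i, AddGroup (A i)] {ι B : Type*}
    [Countable ι] [AddZeroClass B] (f : (∀ i, A i) →+ ι →₀ B)
    (hf : ∀ j, ∃ n, ∀ x ∈ PiNat.cylinder 0 n, f x j = 0) :
    ∃ n, ∀ x ∈ PiNat.cylinder 0 n, f x = 0 := by
  -- The topology is auxiliary: discrete factors make the product a Baire group.
  let _ (i : ℕ) : TopologicalSpace (A i) := ⊥
  have _ (i : ℕ) : DiscreteTopology (A i) := ⟨rfl⟩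
  refine addSubgroup_isOpen_iff_exists_cylinder_subset.1
    (isOpen_ker_of_forall_isOpen_ker_apply f fun j => ?_)
  exact addSubgroup_isOpen_iff_exists_cylinder_subset.2 (hf j)

end Baire

theorem mem_Wsharp {x : TT} : x ∈ Wsharp ↔ x.2 = 0 := by
  simp [Wsharp, LinearMap.range_inl]

theorem ker_piU : LinearMap.ker piU = Wsharp :=
  (LinearMap.range_inl ℂ (ℕ → ℂ) (ℕ →₀ ℂ)).symm

theorem map_Wsharp_eq_ker (φ : TT ≃ₗ[ℂ] TT) :
    Wsharp.map φ.toLinearMap = LinearMap.ker (piU ∘ₗ φ.symm.toLinearMap) := by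
  rw [LinearMap.ker_comp, ker_piU, Submodule.map_equiv_eq_comap_symm]

theorem mem_Vsub {x : TT} : x ∈ Vsub ↔ (Function.support x.1).Finite := by
  simp only [Vsub, LinearMap.mem_range]
  constructor
  · rintro ⟨y, rfl⟩
    exact y.1.hasFiniteSupport
  · exact fun hx => ⟨(Finsupp.ofSupportFinite x.1 hx, x.2), rfl⟩

/-- The inclusion `w ↦ (w, 0)` of `W = ℕ →₀ ℂ` into `T`. -/
noncomputable def inclW : (ℕ →₀ ℂ) →ₗ[ℂ] TT := LinearMap.inl ℂ (ℕ → ℂ) (ℕ →₀ ℂ) ∘ₗ Finsupp.lcoeFun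

theorem inclW_injective : Function.Injective inclW :=
  LinearMap.inl_injective.comp DFunLike.coe_injective

/-- The coordinate subspace of `W` spanned by the `(δ_i, 0)` with `i ∈ s`. -/
noncomputable def coordSub (s : Set ℕ) : Submodule ℂ TT := (Finsupp.supported ℂ ℂ s).map inclW

theorem mem_coordSub {s : Set ℕ} {x : TT} :
    x ∈ coordSub s ↔ x ∈ Vsub ∧ x.2 = 0 ∧ ∀ i ∉ s, x.1 i = 0 := by
  simp only [coordSub, Submodule.mem_map, Finsupp.mem_supported', mem_Vsub]
  constructor
  · rintro ⟨w, hw, rfl⟩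
    exact ⟨w.hasFiniteSupport, rfl, hw⟩
  · exact fun ⟨hV, hx₂, hx₁⟩ => ⟨Finsupp.ofSupportFinite x.1 hV, hx₁, Prod.ext rfl hx₂.symm⟩

theorem tailSpan_eq_coordSub (n : ℕ) : tailSpan n = coordSub (Set.Ici n) := by
  rw [coordSub, Finsupp.supported_eq_span_single, Submodule.map_span, Set.image_image]
  rfl

theorem coordSub_union (s t : Set ℕ) : coordSub (s ∪ t) = coordSub s ⊔ coordSub t := by
  rw [coordSub, Finsupp.supported_union, Submodule.map_sup, coordSub, coordSub]

theorem disjoint_coordSub {s t : Set ℕ} (h : Disjoint s t) :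
    Disjoint (coordSub s) (coordSub t) :=
  Submodule.disjoint_map inclW_injective (Finsupp.disjoint_supported_supported h)

/-- The basis `(δ_i, 0)`, `i ∈ s`, of `coordSub s`. -/
noncomputable def coordSubBasis (s : Set ℕ) : Basis s ℂ (coordSub s) :=
  .ofRepr <| (Submodule.equivMapOfInjective inclW inclW_injective _).symm ≪≫ₗ
    Finsupp.supportedEquivFinsupp s

instance finiteDimensional_coordSub (s : Set ℕ) [Finite s] : FiniteDimensional ℂ (coordSub s) :=
  .of_basis (coordSubBasis s)

theorem finrank_coordSub (s : Set ℕ) : finrank ℂ (coordSub s) = s.ncard :=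
  finrank_eq_nat_card_basis (coordSubBasis s)

/-- The subspace `ℂⁿ × (ℕ →₀ ℂ)` of `T`. -/
noncomputable def headSub (n : ℕ) : Submodule ℂ TT := (Submodule.pi (Set.Ici n) fun _ => ⊥).prod ⊤

theorem mem_headSub {n : ℕ} {x : TT} : x ∈ headSub n ↔ ∀ i, n ≤ i → x.1 i = 0 := by
  simp [headSub]

/-- The subspace of `W^♯` of the `(ω, 0)` with `ω i = 0` for `i < n`. -/
noncomputable def tailSharp (n : ℕ) : Submodule ℂ TT := (Submodule.pi (Set.Iio n) fun _ => ⊥).prod ⊥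

theorem mem_tailSharp {n : ℕ} {x : TT} : x ∈ tailSharp n ↔ (∀ i < n, x.1 i = 0) ∧ x.2 = 0 := by
  simp [tailSharp]

theorem tailSharp_le_Wsharp (n : ℕ) : tailSharp n ≤ Wsharp :=
  fun _ hx => mem_Wsharp.2 (mem_tailSharp.1 hx).2

theorem tailSharp_inf_Vsub (n : ℕ) : tailSharp n ⊓ Vsub = tailSpan n := by
  ext x
  simp only [Submodule.mem_inf, mem_tailSharp, tailSpan_eq_coordSub, mem_coordSub, Set.mem_Ici,
    not_le]
  tauto

theorem tailSpan_le_tailSharp (n : ℕ) : tailSpan n ≤ tailSharp n :=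
  (tailSharp_inf_Vsub n).ge.trans inf_le_left

theorem headSub_le_Vsub (n : ℕ) : headSub n ≤ Vsub := fun _ hx =>
  mem_Vsub.2 <| (Set.finite_Iio n).subset fun i hi =>
    not_le.1 fun hni => hi (mem_headSub.1 hx i hni)

theorem isCompl_headSub_tailSharp (n : ℕ) : IsCompl (headSub n) (tailSharp n) := by
  constructor
  · rw [Submodule.disjoint_def]
    intro x hhead htail
    rw [mem_tailSharp] at htail
    exact Prod.ext (funext fun i => (lt_or_ge i n).elim (htail.1 i) (mem_headSub.1 hhead i)) htail.2
  · rw [codisjoint_iff_le_sup]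
    intro x _
    refine Submodule.mem_sup.2 ⟨((Set.Iio n).indicator x.1, x.2), mem_headSub.2 ?_,
      ((Set.Ici n).indicator x.1, 0), mem_tailSharp.2 ?_, Prod.ext ?_ (add_zero _)⟩
    · intro i hi
      simp [hi]
    · simp +contextual
    · rw [← Set.compl_Iio]
      exact Set.indicator_self_add_compl _ _

theorem headSub_sup_tailSpan (n : ℕ) : headSub n ⊔ tailSpan n = Vsub := by
  rw [← tailSharp_inf_Vsub, ← sup_inf_assoc_of_le _ (headSub_le_Vsub n),
    (isCompl_headSub_tailSharp n).sup_eq_top, top_inf_eq]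

theorem Wsharp_inf_headSub (n : ℕ) : Wsharp ⊓ headSub n = coordSub (Set.Iio n) := by
  ext x
  have hV : x ∈ headSub n → x ∈ Vsub := fun hx => headSub_le_Vsub n hx
  simp only [Submodule.mem_inf, mem_Wsharp, mem_coordSub, Set.mem_Iio, not_lt, ← mem_headSub]
  tauto

theorem Ecomm.eventually_finrank_map_mkQ {W' : Submodule ℂ TT} {k : ℤ} (h : Ecomm W' k) :
    ∀ᶠ m : ℕ in Filter.atTop, (finrank ℂ (W'.map (tailSpan m).mkQ) : ℤ) = m + k := by
  obtain ⟨n, G, -, _, hrank, hdisj, rfl⟩ := h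
  filter_upwards [Filter.eventually_ge_atTop n] with m hnm
  have hdisj_tail : Disjoint (coordSub (Set.Ico n m)) (tailSpan m) := by
    rw [tailSpan_eq_coordSub]
    exact disjoint_coordSub (Set.disjoint_left.2 fun i hi hmi => hi.2.not_ge hmi)
  have htail : tailSpan n = coordSub (Set.Ico n m) ⊔ tailSpan m := by
    rw [tailSpan_eq_coordSub, tailSpan_eq_coordSub, ← coordSub_union, Set.Ico_union_Ici_eq_Ici hnm]
  rw [htail] at hdisj ⊢
  rw [← sup_assoc, Submodule.map_sup, Submodule.mkQ_map_self, sup_bot_eq,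
    finrank_map_mkQ_of_disjoint (hdisj_tail.disjoint_sup_left_of_disjoint_sup_right hdisj),
    finrank_sup_of_disjoint (hdisj.mono_right le_sup_left), finrank_coordSub, Nat.cast_add, hrank,
    Set.ncard_Ico_nat]
  omega

theorem Ecomm.index_unique {W' : Submodule ℂ TT} {k l : ℤ} (hk : Ecomm W' k) (hl : Ecomm W' l) :
    k = l := by
  obtain ⟨m, hmk, hml⟩ :=
    (hk.eventually_finrank_map_mkQ.and hl.eventually_finrank_map_mkQ).exists
  omega

theorem IsMackey.symm {φ : TT ≃ₗ[ℂ] TT} {ψ : RR ≃ₗ[ℂ] RR} (h : IsMackey φ ψ) :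
    IsMackey φ.symm ψ.symm := fun x y => by
  simpa using (h (φ.symm x) (ψ.symm y)).symm

theorem IsMackey.snd_apply_inl {φ : TT ≃ₗ[ℂ] TT} {ψ : RR ≃ₗ[ℂ] RR} (h : IsMackey φ ψ)
    (ω : ℕ → ℂ) (j : ℕ) :
    (φ (ω, 0)).2 j = Finsupp.linearCombination ℂ ω (ψ (0, Pi.single j 1)).1 := by
  have hpair := h (ω, 0) (0, Pi.single j 1)
  simp only [pairB, LinearMap.mk₂_apply, map_zero, zero_add, add_zero] at hpair
  rw [← hpair, Finsupp.linearCombination_apply, Finsupp.sum]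
  simp [Pi.single_apply]

theorem IsMackey.exists_tailSharp_le_ker {φ : TT ≃ₗ[ℂ] TT} {ψ : RR ≃ₗ[ℂ] RR}
    (h : IsMackey φ ψ) : ∃ n, tailSharp n ≤ LinearMap.ker (piU ∘ₗ φ.toLinearMap) := by
  let f : (ℕ → ℂ) →ₗ[ℂ] ℕ →₀ ℂ := piU ∘ₗ φ.toLinearMap ∘ₗ LinearMap.inl ℂ (ℕ → ℂ) (ℕ →₀ ℂ)
  have hcoord (j : ℕ) : ∃ n, ∀ ω ∈ PiNat.cylinder (0 : ℕ → ℂ) n, f ω j = 0 := by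
    obtain ⟨n, hn⟩ := (ψ (0, Pi.single j 1)).1.support.exists_nat_subset_range
    refine ⟨n, fun ω hω => (h.snd_apply_inl ω j).trans <| Finset.sum_eq_zero fun i hi => ?_⟩
    simp [hω i (Finset.mem_range.1 (hn hi))]
  obtain ⟨n, hn⟩ := exists_cylinder_subset_ker f.toAddMonoidHom hcoord
  refine ⟨n, fun x hx => ?_⟩
  obtain ⟨hx₁, hx₂⟩ := mem_tailSharp.1 hx
  have hx_eq : x = (x.1, 0) := Prod.ext rfl hx₂
  rw [hx_eq]
  exact hn x.1 hx₁

theorem finiteDimensional_map_Wsharp {N : Type*} [AddCommGroup N] [Module ℂ N] {g : TT →ₗ[ℂ] N}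
    {n : ℕ} (hn : tailSharp n ≤ LinearMap.ker g) : FiniteDimensional ℂ (Wsharp.map g) := by
  rw [← map_inf_eq_map_of_codisjoint (isCompl_headSub_tailSharp n).codisjoint
    (tailSharp_le_Wsharp n) hn, Wsharp_inf_headSub]
  infer_instance

theorem ecomm_ker_inf_Vsub {N : Type*} [AddCommGroup N] [Module ℂ N] {g : TT →ₗ[ℂ] N} {n : ℕ}
    [FiniteDimensional ℂ ((LinearMap.ker g).map piU)] (hn : tailSharp n ≤ LinearMap.ker g) :
    Ecomm (LinearMap.ker g ⊓ Vsub)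
      (finrank ℂ ((LinearMap.ker g).map piU) - finrank ℂ (Wsharp.map g)) := by
  have hcompl := isCompl_headSub_tailSharp n
  have hhead : LinearMap.ker piU ⊓ headSub n = coordSub (Set.Iio n) := by
    rw [ker_piU, Wsharp_inf_headSub]
  have : FiniteDimensional ℂ (LinearMap.ker piU ⊓ headSub n : Submodule ℂ TT) := by
    rw [hhead]
    infer_instance
  have : FiniteDimensional ℂ (LinearMap.ker g ⊓ headSub n : Submodule ℂ TT) :=
    finiteDimensional_ker_inf (f := piU)
  refine ⟨n, LinearMap.ker g ⊓ headSub n, inf_le_right.trans (headSub_le_Vsub n), this, ?_,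
    hcompl.disjoint.mono inf_le_right (tailSpan_le_tailSharp n), ?_⟩
  · have hrank := finrank_ker_inf_add_finrank_map_ker hcompl.codisjoint
      ((tailSharp_le_Wsharp n).trans ker_piU.ge) hn
    rw [hhead, finrank_coordSub, ker_piU, Set.ncard_Iio_nat] at hrank
    omega
  · rw [inf_sup_assoc_of_le _ ((tailSpan_le_tailSharp n).trans hn), headSub_sup_tailSpan]

theorem IsMackey.ecomm_deg {φ : TT ≃ₗ[ℂ] TT} {ψ : RR ≃ₗ[ℂ] RR} (h : IsMackey φ ψ) :
    Ecomm (Wsharp.map φ.toLinearMap ⊓ Vsub) (deg φ) := by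
  obtain ⟨m, hm⟩ := h.exists_tailSharp_le_ker
  obtain ⟨n, hn⟩ := h.symm.exists_tailSharp_le_ker
  have : FiniteDimensional ℂ ((LinearMap.ker (piU ∘ₗ φ.symm.toLinearMap)).map piU) := by
    rw [← map_Wsharp_eq_ker, ← Submodule.map_comp]
    exact finiteDimensional_map_Wsharp hm
  rw [deg, map_Wsharp_eq_ker φ, ← Submodule.map_comp _ _ Wsharp]
  exact ecomm_ker_inf_Vsub hn

/-- `φ·W = φ(W^♯) ∩ V` is E-commensurable of index `k` with `W` iff `d(φ) = k`. -/
theorem stmt8 (φ : TT ≃ₗ[ℂ] TT) (ψ : RR ≃ₗ[ℂ] RR) (h : IsMackey φ ψ) (k : ℤ) :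
    Ecomm ((Wsharp.map φ.toLinearMap) ⊓ Vsub) k ↔ deg φ = k :=
  ⟨h.ecomm_deg.index_unique, fun hk => hk ▸ h.ecomm_deg⟩
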